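/- arXiv:2203.04717 — 3 statements merged into one kernel-verified Lean document; each statement's English description precedes it below -/
import Mathlib

section
/- Let V be a finite-dimensional real inner product space, W ⊆ 𝔰𝔬(V) a linear subspace, and V_W = V ⊕ W the associated 2-step nilpotent Lie algebra with bracket [(X,A),(Y,B)] = (0, β(X,Y)), where β : V × V → W is determined by ⟨β(X,Y),Z⟩ = ⟨Z(X),Y⟩_V for all Z ∈ W. Let ξ be a linear functional on V_W vanishing on V ⊕ 0, and let Z_ξ ∈ W be the unique element with ξ(0,A) = ⟨A, Z_ξ⟩ for all A ∈ W. Then stab(ξ) = ker(Z_ξ) ⊕ W. Consequently, if ⋂_{Z∈W} ker Z = 0 (so that the center of V_W equals 0 ⊕ W), then ξ is flat (stab(ξ) = center) if and only if Z_ξ is an invertible endomorphism of V. -/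
/-!
The functional `ξ` evaluated on a bracket is `ξ (0, β(X,Y)) = ⟨β(X,Y), Z_ξ⟩ = ⟪Z_ξ X, Y⟫`, so by
nondegeneracy of the inner product `(X, A)` lies in the stabilizer iff `Z_ξ X = 0`. When the common
kernel of `W` is trivial, the center is `0 ⊕ W`, and it equals `ker Z_ξ ⊕ W` iff `Z_ξ` is injective,
that is, bijective by finite-dimensionality.
-/

open scoped RealInnerProductSpace

noncomputable section

/-- The trace inner product `⟨A, B⟩ = Tr(Aᵀ B)` on endomorphisms of a finite-dimensional
real inner product space. -/
def traceInner {V : Type*} [NormedAddCommGroup V] [InnerProductSpace ℝ V]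
    [FiniteDimensional ℝ V] (A B : V →ₗ[ℝ] V) : ℝ :=
  LinearMap.trace ℝ V (LinearMap.adjoint A ∘ₗ B)

/-- The bracket `[(X,A),(Y,B)] = (0, β(X,Y))` on `V ⊕ W`. -/
def VWBracket {V : Type*} [NormedAddCommGroup V] [InnerProductSpace ℝ V]
    (W : Submodule ℝ (V →ₗ[ℝ] V)) (β : V →ₗ[ℝ] V →ₗ[ℝ] ↥W) :
    V × ↥W → V × ↥W → V × ↥W :=
  fun a b => (0, β a.1 b.1)

/-- for the 2-step nilpotent Lie algebra `V_W = V ⊕ W` and a linear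
functional `ξ` vanishing on `V ⊕ 0`, represented on the center by `Z_ξ ∈ W`, the
stabilizer of `ξ` is `ker(Z_ξ) ⊕ W`; hence when `⋂_{Z∈W} ker Z = 0`, `ξ` is flat iff
`Z_ξ` is invertible. -/
theorem stmt_8 {V : Type*} [NormedAddCommGroup V] [InnerProductSpace ℝ V]
    [FiniteDimensional ℝ V]
    (W : Submodule ℝ (V →ₗ[ℝ] V))
    (hW : ∀ A ∈ W, ∀ x y : V, ⟪A x, y⟫ = -⟪x, A y⟫)
    (β : V →ₗ[ℝ] V →ₗ[ℝ] ↥W)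
    (hβ : ∀ X Y : V, ∀ Z ∈ W, traceInner (↑(β X Y)) Z = ⟪Z X, Y⟫)
    (ξ : Module.Dual ℝ (V × ↥W))
    (hξV : ∀ X : V, ξ (X, 0) = 0)
    (Zξ : V →ₗ[ℝ] V) (hZξW : Zξ ∈ W)
    (hZξ : ∀ A : ↥W, ξ (0, A) = traceInner (↑A) Zξ) :
    ({p : V × ↥W | ∀ q : V × ↥W, ξ (VWBracket W β p q) = 0} =
      {p : V × ↥W | Zξ p.1 = 0}) ∧
    ((∀ X : V, (∀ Z ∈ W, Z X = 0) → X = 0) →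
      ({p : V × ↥W | ∀ q : V × ↥W, ξ (VWBracket W β p q) = 0} =
          {p : V × ↥W | ∀ Z ∈ W, Z p.1 = 0} ↔
        Function.Bijective Zξ)) := by
  have hstab : {p : V × ↥W | ∀ q : V × ↥W, ξ (VWBracket W β p q) = 0} =
      {p : V × ↥W | Zξ p.1 = 0} := by
    ext p
    simp only [Set.mem_setOf_eq, VWBracket, hZξ, hβ _ _ Zξ hZξW]
    exact ⟨fun h => inner_self_eq_zero.1 (h (Zξ p.1, 0)), fun h q => by simp [h]⟩
  refine ⟨hstab, fun hker => ?_⟩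
  rw [hstab]
  constructor
  · intro h
    have hinj : Function.Injective Zξ := by
      refine (injective_iff_map_eq_zero Zξ).2 fun X hX => hker X ?_
      have hmem : ((X, 0) : V × ↥W) ∈ {p : V × ↥W | Zξ p.1 = 0} := hX
      rw [h] at hmem
      exact hmem
    exact ⟨hinj, LinearMap.injective_iff_surjective.1 hinj⟩
  · intro hbij
    ext p
    refine ⟨fun hp Z _ => ?_, fun hp => hp Zξ hZξW⟩
    have hp0 : p.1 = 0 := hbij.1 (hp.trans (map_zero Zξ).symm)
    rw [hp0, map_zero]
end
end

section
/- Let 𝔤 be a finite-dimensional real 2-step nilpotent Lie algebra, i.e. [[𝔤,𝔤],𝔤] = 0, let C := [𝔤,𝔤] be the linear span of all brackets, and let U be a linear subspace with 𝔤 = U ⊕ C. Suppose U = ⊕_{p<0} U_p is a vector space direct sum decomposition indexed by negative integers with finitely many nonzero summands. For each p < 0 set C_p := Σ_{k+l=p} span{[x,y] : x ∈ U_k, y ∈ U_l}. Then the following are equivalent: (i) there exists a Lie algebra grading 𝔤 = ⊕_{p<0}𝔤_p (so [𝔤_p,𝔤_q] ⊆ 𝔤_{p+q}) with U_p ⊆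 𝔤_p for all p; (ii) the family of subspaces (C_p)_{p<0} is linearly independent, i.e. their sum C = Σ_p C_p is a direct sum (equivalently, (Σ_{k+l<p} span{[x,y]: x ∈ U_k, y ∈ U_l}) ∩ (Σ_{k+l=p} span{[x,y]: x ∈ U_k, y ∈ U_l}) = 0 for all p). When (ii) holds, 𝔤_p := U_p ⊕ C_p is such a grading. -/
/-!
The grading is forced on `C = [𝔤,𝔤]`: any grading with `U_p ⊆ 𝔤_p` satisfies `C_p ⊆ 𝔤_p`, so the
subspaces `C_p` inherit independence from the `𝔤_p`; this gives (i) ⇒ (ii).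

Conversely, the condition that every `C_p` meets `Σ_{k+l<p} [U_k, U_l] = Σ_{q<p} C_q` trivially
is a triangular form of independence: in a vanishing finite sum `Σ c_q` the term of largest index
lies in the span of the lower ones, hence is zero (`iSupIndep_of_disjoint_lt`). Since `C` is
central and `𝔤 = U + C`, every bracket is a bracket of elements of `U`, so `Σ C_p = C`
(`iSup_cPart`). As `U ∩ C = 0`, the two decompositions of `U` and `C` combine to the decomposition
`𝔤 = ⊕ (U_p ⊕ C_p)` (`iSupIndep_sup`), and centrality of `C` makes it compatible with the bracket.
-/


/-- The span of brackets of elements of `U' k` with elements of `U' l`. -/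
def brSpan {L : Type*} [LieRing L] [LieAlgebra ℝ L] (U' : ℤ → Submodule ℝ L) (k l : ℤ) :
    Submodule ℝ L :=
  Submodule.span ℝ {z : L | ∃ x ∈ U' k, ∃ y ∈ U' l, ⁅x, y⁆ = z}

/-- `C_p = Σ_{k+l=p} span {[x,y] : x ∈ U'_k, y ∈ U'_l}`. -/
def cPart {L : Type*} [LieRing L] [LieAlgebra ℝ L] (U' : ℤ → Submodule ℝ L) (p : ℤ) :
    Submodule ℝ L :=
  ⨆ (k : ℤ) (l : ℤ) (_ : k + l = p), brSpan U' k l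

/-- `Σ_{k+l<p} span {[x,y] : x ∈ U'_k, y ∈ U'_l}`. -/
def lowPart {L : Type*} [LieRing L] [LieAlgebra ℝ L] (U' : ℤ → Submodule ℝ L) (p : ℤ) :
    Submodule ℝ L :=
  ⨆ (k : ℤ) (l : ℤ) (_ : k + l < p), brSpan U' k l

/-- Over a linearly ordered index type, independence only has to be tested against the
subspaces of smaller index. -/
theorem iSupIndep_of_disjoint_lt {ι K V : Type*} [LinearOrder ι] [Ring K] [AddCommGroup V]
    [Module K V] (A : ι → Submodule K V) (h : ∀ i, Disjoint (⨆ (j) (_ : j < i), A j) (A i)) :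
    iSupIndep A := by
  rw [iSupIndep_iff_finsetSum_eq_zero_imp_eq_zero]
  intro s
  induction s using Finset.induction_on_max with
  | empty => simp
  | insert a s hlt ih =>
    intro v hv hsum
    have ha : a ∉ s := fun has => lt_irrefl a (hlt a has)
    rw [Finset.sum_insert ha] at hsum
    have hlow : ∑ i ∈ s, v i ∈ ⨆ (j) (_ : j < a), A j :=
      Submodule.sum_mem _ fun i hi =>
        (le_iSup₂ (f := fun j (_ : j < a) => A j) i (hlt i hi)) (hv i (Finset.mem_insert_of_mem hi))
    have hva : v a = 0 := by
      refine Submodule.disjoint_def.1 (h a) _ ?_ (hv a (Finset.mem_insert_self a s))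
      rw [eq_neg_of_add_eq_zero_left hsum]
      exact Submodule.neg_mem _ hlow
    rw [hva, zero_add] at hsum
    intro i hi
    rcases Finset.mem_insert.1 hi with rfl | hi
    · exact hva
    · exact ih v (fun j hj => hv j (Finset.mem_insert_of_mem hj)) hsum i hi

theorem iSupIndep_sup {ι K V : Type*} [Ring K] [AddCommGroup V] [Module K V]
    {A B : ι → Submodule K V} (hA : iSupIndep A) (hB : iSupIndep B)
    (hAB : Disjoint (⨆ i, A i) (⨆ i, B i)) : iSupIndep fun i => A i ⊔ B i := by
  rw [iSupIndep_iff_finsetSum_eq_zero_imp_eq_zero] at *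
  intro s v hv hsum
  have hdec : ∀ i, ∃ a b, i ∈ s → a ∈ A i ∧ b ∈ B i ∧ a + b = v i := by
    intro i
    by_cases hi : i ∈ s
    · obtain ⟨a, ha, b, hb, hab⟩ := Submodule.mem_sup.1 (hv i hi)
      exact ⟨a, b, fun _ => ⟨ha, hb, hab⟩⟩
    · exact ⟨0, 0, fun h => absurd h hi⟩
  choose a b hab using hdec
  have hsplit : ∑ i ∈ s, a i + ∑ i ∈ s, b i = 0 := by
    rw [← Finset.sum_add_distrib, ← hsum]
    exact Finset.sum_congr rfl fun i hi => (hab i hi).2.2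
  have hbmem : ∑ i ∈ s, b i ∈ ⨆ i, B i :=
    Submodule.sum_mem _ fun i hi => le_iSup B i (hab i hi).2.1
  have ha0 : ∑ i ∈ s, a i = 0 := by
    refine Submodule.disjoint_def.1 hAB _
      (Submodule.sum_mem _ fun i hi => le_iSup A i (hab i hi).1) ?_
    rw [eq_neg_of_add_eq_zero_left hsplit]
    exact Submodule.neg_mem _ hbmem
  have hb0 : ∑ i ∈ s, b i = 0 := by rwa [ha0, zero_add] at hsplit
  intro i hi
  rw [← (hab i hi).2.2, hA s a (fun j hj => (hab j hj).1) ha0 i hi,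
    hB s b (fun j hj => (hab j hj).2.1) hb0 i hi, add_zero]

section

variable {L : Type*} [LieRing L] [LieAlgebra ℝ L]

theorem lie_mem_cPart (U' : ℤ → Submodule ℝ L) {k l : ℤ} {x y : L} (hx : x ∈ U' k)
    (hy : y ∈ U' l) : ⁅x, y⁆ ∈ cPart U' (k + l) :=
  (le_iSup_of_le k <| le_iSup_of_le l <| le_iSup_of_le rfl le_rfl :
    brSpan U' k l ≤ cPart U' (k + l)) (Submodule.subset_span ⟨x, hx, y, hy, rfl⟩)

theorem cPart_le {U' : ℤ → Submodule ℝ L} {p : ℤ} {S : Submodule ℝ L}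
    (h : ∀ k l, k + l = p → ∀ x ∈ U' k, ∀ y ∈ U' l, ⁅x, y⁆ ∈ S) : cPart U' p ≤ S := by
  refine iSup_le fun k => iSup_le fun l => iSup_le fun hkl => Submodule.span_le.2 ?_
  rintro _ ⟨x, hx, y, hy, rfl⟩
  exact h k l hkl x hx y hy

theorem lowPart_eq (U' : ℤ → Submodule ℝ L) (p : ℤ) :
    lowPart U' p = ⨆ (q : ℤ) (_ : q < p), cPart U' q := by
  apply le_antisymm
  · refine iSup_le fun k => iSup_le fun l => iSup_le fun hkl => ?_
    refine le_trans ?_ (le_iSup₂ (f := fun q (_ : q < p) => cPart U' q) (k + l) hkl)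
    exact le_iSup_of_le k <| le_iSup_of_le l <| le_iSup_of_le rfl le_rfl
  · refine iSup₂_le fun q hq => iSup_le fun k => iSup_le fun l => iSup_le fun hkl => ?_
    exact le_iSup_of_le k <| le_iSup_of_le l <| le_iSup_of_le (hkl ▸ hq) le_rfl

/-- If the span `C` of all brackets is central and `𝔤 = U + C`, the `C_p` sum up to `C`. -/
theorem iSup_cPart (h2 : ∀ x y z : L, ⁅⁅x, y⁆, z⁆ = 0) (U' : ℤ → Submodule ℝ L)
    {C : Submodule ℝ L} (hC : C = Submodule.span ℝ {z : L | ∃ x y : L, ⁅x, y⁆ = z})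
    (hcod : (⨆ p, U' p) ⊔ C = ⊤) : ⨆ p, cPart U' p = C := by
  have hcen : ∀ c ∈ C, ∀ z : L, ⁅c, z⁆ = 0 := by
    intro c hc z
    rw [hC] at hc
    induction hc using Submodule.span_induction with
    | mem c hc => obtain ⟨x, y, rfl⟩ := hc; exact h2 x y z
    | zero => simp
    | add a b _ _ ha hb => rw [add_lie, ha, hb, add_zero]
    | smul r a _ ha => rw [smul_lie, ha, smul_zero]
  apply le_antisymm
  · refine iSup_le fun p => cPart_le fun k l _ x _ y _ => ?_
    rw [hC]
    exact Submodule.subset_span ⟨x, y, rfl⟩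
  · have hU : ∀ u ∈ ⨆ p, U' p, ∀ w ∈ ⨆ p, U' p, ⁅u, w⁆ ∈ ⨆ p, cPart U' p := by
      intro u hu w hw
      induction hu using Submodule.iSup_induction' with
      | mem k u hu =>
        induction hw using Submodule.iSup_induction' with
        | mem l w hw => exact le_iSup (cPart U') (k + l) (lie_mem_cPart U' hu hw)
        | zero => simp
        | add a b _ _ ha hb => rw [lie_add]; exact Submodule.add_mem _ ha hb
      | zero => simp
      | add a b _ _ ha hb => rw [add_lie]; exact Submodule.add_mem _ ha hb
    conv_lhs => rw [hC]
    refine Submodule.span_le.2 ?_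
    rintro _ ⟨x, y, rfl⟩
    obtain ⟨u, hu, c, hc, rfl⟩ := Submodule.mem_sup.1 (hcod ▸ Submodule.mem_top : x ∈ _ ⊔ C)
    obtain ⟨w, hw, d, hd, rfl⟩ := Submodule.mem_sup.1 (hcod ▸ Submodule.mem_top : y ∈ _ ⊔ C)
    have hd0 : ⁅u, d⁆ = 0 := by rw [← lie_skew, hcen d hd, neg_zero]
    rw [add_lie, hcen c hc, add_zero, lie_add, hd0, add_zero]
    exact hU u hu w hw

end

/-- for a 2-step nilpotent real Lie algebra with `C = [𝔤,𝔤]`, a complement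
`U = ⊕_{p<0} U_p` of `C`, a grading of `𝔤` extending the decomposition `(U_p)` exists iff
the subspaces `C_p` are independent; and in that case `𝔤_p = U_p ⊕ C_p` is such a grading. -/
theorem stmt_11 {L : Type*} [LieRing L] [LieAlgebra ℝ L] [FiniteDimensional ℝ L]
    (h2 : ∀ x y z : L, ⁅⁅x, y⁆, z⁆ = 0)
    (C : Submodule ℝ L) (hC : C = Submodule.span ℝ {z : L | ∃ x y : L, ⁅x, y⁆ = z})
    (U : Submodule ℝ L) (hUC : IsCompl U C)
    (U' : ℤ → Submodule ℝ L)
    (hU'neg : ∀ p : ℤ, 0 ≤ p → U' p = ⊥)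
    (hU'sup : (⨆ p : ℤ, U' p) = U)
    (hU'indep : ∀ p : ℤ, U' p ⊓ (⨆ (q : ℤ) (_ : q ≠ p), U' q) = ⊥) :
    ((∃ g : ℤ → Submodule ℝ L,
        (∀ p : ℤ, 0 ≤ p → g p = ⊥) ∧ DirectSum.IsInternal g ∧
        (∀ p q : ℤ, ∀ x ∈ g p, ∀ y ∈ g q, ⁅x, y⁆ ∈ g (p + q)) ∧
        ∀ p : ℤ, U' p ≤ g p) ↔
      ∀ p : ℤ, lowPart U' p ⊓ cPart U' p = ⊥) ∧
    ((∀ p : ℤ, lowPart U' p ⊓ cPart U' p = ⊥) →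
      ((∀ p : ℤ, 0 ≤ p → U' p ⊔ cPart U' p = ⊥) ∧
        DirectSum.IsInternal (fun p : ℤ => U' p ⊔ cPart U' p) ∧
        (∀ p q : ℤ, ∀ x ∈ U' p ⊔ cPart U' p, ∀ y ∈ U' q ⊔ cPart U' q,
          ⁅x, y⁆ ∈ U' (p + q) ⊔ cPart U' (p + q)) ∧
        ∀ p : ℤ, U' p ≤ U' p ⊔ cPart U' p)) := by
  have hfwd : (∀ p : ℤ, lowPart U' p ⊓ cPart U' p = ⊥) →
      ((∀ p : ℤ, 0 ≤ p → U' p ⊔ cPart U' p = ⊥) ∧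
        DirectSum.IsInternal (fun p : ℤ => U' p ⊔ cPart U' p) ∧
        (∀ p q : ℤ, ∀ x ∈ U' p ⊔ cPart U' p, ∀ y ∈ U' q ⊔ cPart U' q,
          ⁅x, y⁆ ∈ U' (p + q) ⊔ cPart U' (p + q)) ∧
        ∀ p : ℤ, U' p ≤ U' p ⊔ cPart U' p) := by
    intro h
    have hsupC : ⨆ p, cPart U' p = C :=
      iSup_cPart h2 U' hC (by rw [hU'sup]; exact hUC.sup_eq_top)
    have hcen : ∀ p, ∀ c ∈ cPart U' p, ∀ z : L, ⁅z, c⁆ = 0 := by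
      intro p c hc z
      have hle : cPart U' p ≤ LinearMap.ker (LieAlgebra.ad ℝ L z) :=
        cPart_le fun k l _ x _ y _ => by
          rw [LinearMap.mem_ker, LieAlgebra.ad_apply, ← lie_skew, h2, neg_zero]
      simpa using hle hc
    refine ⟨fun p hp => ?_, ?_, ?_, fun p => le_sup_left⟩
    · rw [hU'neg p hp, bot_sup_eq, eq_bot_iff]
      refine cPart_le fun k l hkl x hx y hy => ?_
      -- one of the two degrees is non-negative, so one of the two factors vanishes
      rcases (by omega : 0 ≤ k ∨ 0 ≤ l) with hk | hl
      · rw [hU'neg k hk, Submodule.mem_bot] at hx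
        simp [hx]
      · rw [hU'neg l hl, Submodule.mem_bot] at hy
        simp [hy]
    · apply DirectSum.isInternal_submodule_of_iSupIndep_of_iSup_eq_top
      · apply iSupIndep_sup
        · exact fun p => disjoint_iff.2 (hU'indep p)
        · refine iSupIndep_of_disjoint_lt _ fun p => ?_
          rw [← lowPart_eq]
          exact disjoint_iff.2 (h p)
        · rw [hU'sup, hsupC]
          exact hUC.disjoint
      · rw [iSup_sup_eq, hU'sup, hsupC]
        exact hUC.sup_eq_top
    · intro p q x hx y hy
      obtain ⟨u, hu, c, hc, rfl⟩ := Submodule.mem_sup.1 hx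
      obtain ⟨w, hw, d, hd, rfl⟩ := Submodule.mem_sup.1 hy
      rw [lie_add, hcen q d hd, add_zero, add_lie, ← lie_skew c w, hcen p c hc, neg_zero,
        add_zero]
      exact le_sup_right (a := U' (p + q)) (lie_mem_cPart U' hu hw)
  refine ⟨⟨?_, fun h => ⟨_, hfwd h⟩⟩, hfwd⟩
  rintro ⟨g, -, hg, hbr, hUg⟩ p
  have hCg : ∀ q, cPart U' q ≤ g q := fun q => cPart_le fun k l hkl x hx y hy =>
    hkl ▸ hbr k l x (hUg k hx) y (hUg l hy)
  rw [lowPart_eq, inf_comm, ← disjoint_iff]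
  refine (hg.submodule_iSupIndep p).mono (hCg p) (iSup₂_le fun q hq => ?_)
  exact (hCg q).trans (le_iSup₂ (f := fun j (_ : j ≠ p) => g j) q hq.ne)
end

section
/- Let m ≥ 1 and let ω be an invertible skew-symmetric real 2m × 2m matrix. For all real numbers ξ₁, ξ₂, the 4m × 4m block matrix M(ξ₁,ξ₂) with blocks [[ξ₁·ω, ξ₂·ω], [ξ₂·ω, −ξ₁·ω]] has determinant det M(ξ₁,ξ₂) = (ξ₁² + ξ₂²)^{2m} · (det ω)². In particular M(ξ₁,ξ₂) is invertible if and only if (ξ₁,ξ₂) ≠ (0,0). -/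
/-!
The block matrix is the Kronecker product `K ⊗ ω` with `K = [[ξ₁, ξ₂], [ξ₂, -ξ₁]]`, so its
determinant is `(det K)^{2m} (det ω)^2` with `det K = -(ξ₁² + ξ₂²)`; the sign disappears because
the exponent is even. Invertibility follows since `det ω ≠ 0` and a sum of two real squares
vanishes only at the origin.
-/

open scoped Kronecker in
/-- A `2 × 2` block matrix whose blocks are all multiples of `ω` is, up to reindexing, the
Kronecker product of the matrix of coefficients with `ω`. -/
lemma det_fromBlocks_smul {n : Type*} [Fintype n] [DecidableEq n] (ω : Matrix n n ℝ)
    (a b c d : ℝ) :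
    (Matrix.fromBlocks (a • ω) (b • ω) (c • ω) (d • ω)).det =
      (a * d - b * c) ^ Fintype.card n * ω.det ^ 2 := by
  let e : n ⊕ n ≃ Fin 2 × n :=
    (Equiv.boolProdEquivSum n).symm.trans (finTwoEquiv.symm.prodCongr (Equiv.refl n))
  have h : Matrix.fromBlocks (a • ω) (b • ω) (c • ω) (d • ω) =
      (!![a, b; c, d] ⊗ₖ ω).submatrix e e := by
    ext (i | i) (j | j) <;> simp [e, finTwoEquiv]
  rw [h, Matrix.det_submatrix_equiv_self, Matrix.det_kronecker, Matrix.det_fin_two_of,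
    Fintype.card_fin]

/-- for an invertible skew-symmetric real `2m × 2m` matrix `ω`,
`det [[ξ₁ω, ξ₂ω], [ξ₂ω, -ξ₁ω]] = (ξ₁² + ξ₂²)^{2m} (det ω)²`; in particular the block
matrix is invertible iff `(ξ₁, ξ₂) ≠ (0,0)`. -/
theorem stmt_17 {m : ℕ} (hm : 1 ≤ m) (ω : Matrix (Fin (2 * m)) (Fin (2 * m)) ℝ)
    (hskew : ω.transpose = -ω) (hinv : IsUnit ω) (ξ₁ ξ₂ : ℝ) :
    (Matrix.fromBlocks (ξ₁ • ω) (ξ₂ • ω) (ξ₂ • ω) (-(ξ₁ • ω))).det =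
      (ξ₁ ^ 2 + ξ₂ ^ 2) ^ (2 * m) * ω.det ^ 2 ∧
    (IsUnit (Matrix.fromBlocks (ξ₁ • ω) (ξ₂ • ω) (ξ₂ • ω) (-(ξ₁ • ω))) ↔
      (ξ₁, ξ₂) ≠ (0, 0)) := by
  have hdet : (Matrix.fromBlocks (ξ₁ • ω) (ξ₂ • ω) (ξ₂ • ω) (-(ξ₁ • ω))).det =
      (ξ₁ ^ 2 + ξ₂ ^ 2) ^ (2 * m) * ω.det ^ 2 := by
    rw [← neg_smul, det_fromBlocks_smul, Fintype.card_fin, pow_mul, pow_mul]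
    ring
  refine ⟨hdet, ?_⟩
  have hω : ω.det ≠ 0 := ((Matrix.isUnit_iff_isUnit_det ω).mp hinv).ne_zero
  have hm' : 2 * m ≠ 0 := by lia
  rw [Matrix.isUnit_iff_isUnit_det, hdet, isUnit_iff_ne_zero, mul_ne_zero_iff,
    and_iff_left (pow_ne_zero 2 hω), pow_ne_zero_iff hm', not_iff_not, Prod.mk.injEq]
  constructor
  · intro h
    constructor <;> nlinarith [sq_nonneg ξ₁, sq_nonneg ξ₂]
  · rintro ⟨rfl, rfl⟩
    norm_num
end
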